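/- There exists a universal constant c > 0 with the following property (signal strengthening). For all real numbers γ ≥ θ > 0 and every finite γ-feasible set S of links (under any power assignment), S can be partitioned into at most c·(γ/θ)² sets, each of which is θ-feasible. -/

import Mathlib

open Finset MeasureTheory
open scoped Classical

/-- A wireless link: an ordered sender–receiver pair of points in a metric space. -/
structure Link (X : Type*) where
  sender : X
  receiver : X

variable {X : Type*} [MetricSpace X]

/-- The length `ℓ_v` of a link. -/
noncomputable def linkLen (v : Link X) : ℝ := dist v.sender v.receiver

/-- The asymmetric distance `d_{wv}` from the sender of `w` to the receiver of `v`. -/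
noncomputable def linkDist (w v : Link X) : ℝ := dist w.sender v.receiver

/-- The constant `c_v = β/(1 - β N ℓ_v^α / P_v)`. -/
noncomputable def cConst (α β N : ℝ) (pw : Link X → ℝ) (v : Link X) : ℝ :=
  β / (1 - β * N * linkLen v ^ α / pw v)

/-- The (thresholded) affectance `a_w(v)` of link `w` on link `v`. -/
noncomputable def aff (α β N : ℝ) (pw : Link X → ℝ) (w v : Link X) : ℝ :=
  if w = v then 0
  else min 1 (cConst α β N pw v * (pw w / pw v) * (linkLen v / linkDist w v) ^ α)

/-- `a_S(v) = Σ_{w ∈ S} a_w(v)`. -/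
noncomputable def affIn (α β N : ℝ) (pw : Link X → ℝ) (S : Finset (Link X)) (v : Link X) : ℝ :=
  ∑ w ∈ S, aff α β N pw w v

/-- `a_v(S) = Σ_{w ∈ S} a_v(w)`. -/
noncomputable def affOut (α β N : ℝ) (pw : Link X → ℝ) (v : Link X) (S : Finset (Link X)) : ℝ :=
  ∑ w ∈ S, aff α β N pw v w

/-!
View the affectances as weights `a w v ≥ 0` from `w` to `v`. If they were symmetric, a `k`-colouring
minimising the total weight inside the colour classes would do: no vertex gains by changing its
colour, so its weight within its own class is at most the average over all `k` classes. In general,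
a Perron-type argument gives factors `y v > 0` with
`∑ w, y w * a v w < y v * (k * θ - ∑ w, a w v)` for every `v`, provided that every in-weight
`∑ w, a w v` is less than `k * θ / 2`; minimising for the symmetric weights
`y v * a w v + y w * a v w` then leaves an in-weight below `θ` within each class. Since `k` only has
to exceed `2 * γ / θ`, the number of classes is even linear in `γ / θ`.
-/

section Coloring

variable {ι κ : Type*} [Fintype ι] [DecidableEq κ]

/-- The total weight of the ordered pairs of vertices which `f` colours alike, the quantity
minimised in the local-optimum argument. Each unordered pair is counted twice. -/
def monochromaticWeight {R : Type*} [AddCommMonoid R] (b : ι → ι → R) (f : ι → κ) : R :=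
  ∑ v, ∑ w, if f v = f w then b v w else 0

variable {R : Type*} [CommRing R]

theorem monochromaticWeight_update [DecidableEq ι] {b : ι → ι → R}
    (hsymm : ∀ v w, b v w = b w v) (hself : ∀ v, b v v = 0) (f : ι → κ) (u : ι) (i : κ) :
    monochromaticWeight b (Function.update f u i) = monochromaticWeight b f +
      2 * (∑ w with f w = i, b u w - ∑ w with f w = f u, b u w) := by
  let increment (w : ι) : R := (if f w = i then b u w else 0) - if f w = f u then b u w else 0
  have hterm (v w : ι) :
      (if Function.update f u i v = Function.update f u i w then b v w else 0) =
        (if f v = f w then b v w else 0) + (if v = u then increment w else 0) +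
          if w = u then increment v else 0 := by
    by_cases hv : v = u <;> by_cases hw : w = u <;>
      simp [increment, hv, hw, hself, hsymm v, eq_comm]
  have hincrement : ∑ w, increment w = ∑ w with f w = i, b u w - ∑ w with f w = f u, b u w := by
    simp only [increment, sum_sub_distrib, sum_filter]
  simp only [monochromaticWeight, hterm, sum_add_distrib, sum_ite_irrel, sum_const_zero,
    sum_ite_eq', mem_univ, if_true, hincrement]
  ring

theorem exists_coloring_card_mul_sum_class_le [LinearOrder R] [IsStrictOrderedRing R]
    [Fintype κ] [Nonempty κ] {b : ι → ι → R}
    (hsymm : ∀ v w, b v w = b w v) (hself : ∀ v, b v v = 0) :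
    ∃ f : ι → κ, ∀ v, Fintype.card κ * ∑ w with f w = f v, b v w ≤ ∑ w, b v w := by
  obtain ⟨f, hf⟩ := Finite.exists_min (monochromaticWeight (κ := κ) b)
  have hmin (v : ι) (i : κ) : ∑ w with f w = f v, b v w ≤ ∑ w with f w = i, b v w := by
    have := hf (Function.update f v i)
    rw [monochromaticWeight_update hsymm hself] at this
    linarith
  refine ⟨f, fun v => ?_⟩
  calc Fintype.card κ * ∑ w with f w = f v, b v w
      = ∑ _i : κ, ∑ w with f w = f v, b v w := by simp
    _ ≤ ∑ i, ∑ w with f w = i, b v w := sum_le_sum fun i _ => hmin v i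
    _ = ∑ w, b v w := sum_fiberwise _ _ _

end Coloring

section SubinvariantVector

open Matrix Filter Topology

variable {ι : Type*} [Fintype ι]

theorem tendsto_pow_atTop_nhds_zero_of_row_sum_norm_lt_one [DecidableEq ι] {R : Type*}
    [NormedRing R] {A : Matrix ι ι R} (hrow : ∀ i, ∑ j, ‖A i j‖ < 1) :
    Tendsto (fun n : ℕ => A ^ n) atTop (𝓝 0) := by
  let _ : NormedRing (Matrix ι ι R) := Matrix.linftyOpNormedRing
  refine tendsto_pow_atTop_nhds_zero_of_norm_lt_one ?_
  rw [Matrix.linfty_opNorm_def, ← NNReal.coe_one, NNReal.coe_lt_coe,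
    Finset.sup_lt_iff zero_lt_one]
  exact fun i _ => by simpa [← NNReal.coe_lt_coe] using hrow i

theorem exists_pos_vecMul_lt_of_row_sum_lt_one {A : Matrix ι ι ℝ}
    (hA : ∀ i j, 0 ≤ A i j) (hrow : ∀ i, ∑ j, A i j < 1) :
    ∃ x : ι → ℝ, (∀ i, 0 < x i) ∧ ∀ j, (x ᵥ* A) j < x j := by
  have hpow : Tendsto (fun n : ℕ => A ^ n) atTop (𝓝 0) :=
    tendsto_pow_atTop_nhds_zero_of_row_sum_norm_lt_one fun i => by
      simpa only [Real.norm_of_nonneg (hA i _)] using hrow i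
  have hlim : Tendsto (fun n : ℕ => 1 ᵥ* A ^ n) atTop (𝓝 0) := by
    have hcont : Continuous fun M : Matrix ι ι ℝ => (1 : ι → ℝ) ᵥ* M := by fun_prop
    simpa [Function.comp_def] using (hcont.tendsto 0).comp hpow
  obtain ⟨n, hn⟩ : ∃ n : ℕ, ∀ j, (1 ᵥ* A ^ n) j < 1 :=
    (eventually_all.2 fun j => (tendsto_pi_nhds.1 hlim j).eventually_lt_const one_pos).exists
  -- The truncated Neumann series `x = 1ᵀ ∑_{m < n} Aᵐ` satisfies `x A = x - (1ᵀ - 1ᵀ Aⁿ)`.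
  let x : ι → ℝ := 1 ᵥ* ∑ m ∈ range n, A ^ m
  have hx : x ᵥ* A = x + 1 ᵥ* A ^ n - 1 := by
    have hgeom := geom_sum_mul A n
    rw [mul_sub, mul_one, sub_eq_iff_eq_add] at hgeom
    rw [Matrix.vecMul_vecMul, hgeom]
    simp only [vecMul_add, vecMul_sub, vecMul_one, x]
    abel
  have hx_nonneg : 0 ≤ x := fun j => sum_nonneg fun i _ => by
    simpa only [Pi.one_apply, one_mul, Matrix.sum_apply] using
      sum_nonneg fun m _ => Matrix.pow_apply_nonneg hA m i j
  have hxA_nonneg (j : ι) : 0 ≤ (x ᵥ* A) j :=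
    sum_nonneg fun i _ => mul_nonneg (hx_nonneg i) (hA i j)
  have hxA_lt (j : ι) : (x ᵥ* A) j < x j := by
    have := hn j
    simp only [hx, Pi.add_apply, Pi.sub_apply, Pi.one_apply]
    linarith
  exact ⟨x, fun j => (hxA_nonneg j).trans_lt (hxA_lt j), hxA_lt⟩

end SubinvariantVector

theorem exists_pos_sum_mul_lt_mul {ι : Type*} [Fintype ι] {a : ι → ι → ℝ}
    (ha : ∀ w v, 0 ≤ a w v) {s : ι → ℝ} (hs : ∀ v, ∑ w, a w v < s v) :
    ∃ y : ι → ℝ, (∀ v, 0 < y v) ∧ ∀ v, ∑ w, y w * a v w < y v * s v := by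
  have hs_pos (v : ι) : 0 < s v := (sum_nonneg fun w _ => ha w v).trans_lt (hs v)
  obtain ⟨x, hx_pos, hx⟩ := exists_pos_vecMul_lt_of_row_sum_lt_one
    (A := Matrix.of fun v w => a w v / s v)
    (fun v w => div_nonneg (ha w v) (hs_pos v).le)
    (fun v => by simpa [← sum_div, div_lt_one (hs_pos v)] using hs v)
  refine ⟨fun v => x v / s v, fun v => div_pos (hx_pos v) (hs_pos v), fun v => ?_⟩
  calc ∑ w, x w / s w * a v w = ∑ w, x w * (a v w / s w) := by
        simp only [div_mul_eq_mul_div, mul_div_assoc]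
    _ < x v := hx v
    _ = x v / s v * s v := (div_mul_cancel₀ _ (hs_pos v).ne').symm

theorem exists_coloring_sum_class_lt {ι κ : Type*} [Fintype ι] [Fintype κ] [Nonempty κ]
    [DecidableEq κ] {a : ι → ι → ℝ} (ha : ∀ w v, 0 ≤ a w v) (hself : ∀ v, a v v = 0)
    {θ : ι → ℝ} (hθ : ∀ v, 2 * ∑ w, a w v < Fintype.card κ * θ v) :
    ∃ f : ι → κ, ∀ v, ∑ w with f w = f v, a w v < θ v := by
  obtain ⟨y, hy_pos, hy⟩ := exists_pos_sum_mul_lt_mul ha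
    (s := fun v => Fintype.card κ * θ v - ∑ w, a w v) fun v => by linarith [hθ v]
  obtain ⟨f, hf⟩ := exists_coloring_card_mul_sum_class_le (κ := κ)
    (b := fun v w => y v * a w v + y w * a v w)
    (fun v w => add_comm _ _) (fun v => by simp only [hself, mul_zero, add_zero])
  refine ⟨f, fun v => ?_⟩
  have hfactor : 0 ≤ Fintype.card κ * y v := mul_nonneg (Nat.cast_nonneg _) (hy_pos v).le
  refine lt_of_mul_lt_mul_left ?_ hfactor
  calc Fintype.card κ * y v * ∑ w with f w = f v, a w v
      = Fintype.card κ * ∑ w with f w = f v, y v * a w v := by rw [mul_assoc, mul_sum]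
    _ ≤ Fintype.card κ * ∑ w with f w = f v, (y v * a w v + y w * a v w) := by
        gcongr with w
        exact le_add_of_nonneg_right (mul_nonneg (hy_pos w).le (ha v w))
    _ ≤ ∑ w, (y v * a w v + y w * a v w) := hf v
    _ = y v * ∑ w, a w v + ∑ w, y w * a v w := by rw [sum_add_distrib, mul_sum]
    _ < y v * ∑ w, a w v + y v * (Fintype.card κ * θ v - ∑ w, a w v) := by gcongr; exact hy v
    _ = Fintype.card κ * y v * θ v := by ring

theorem stmt_13_general {ι : Type*} {a : ι → ι → ℝ} {S : Finset ι} {γ θ : ℝ}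
    (ha : ∀ w ∈ S, ∀ v ∈ S, 0 ≤ a w v) (hself : ∀ v ∈ S, a v v = 0)
    (hγ : 0 ≤ γ) (hθ : 0 < θ) (hS : ∀ v ∈ S, ∑ w ∈ S, a w v ≤ γ) :
    ∃ (k : ℕ) (f : ι → ℕ), (k : ℝ) ≤ 2 * (γ / θ) + 1 ∧ (∀ v ∈ S, f v < k) ∧
      ∀ i : ℕ, ∀ v ∈ S.filter (fun w => f w = i),
        ∑ w ∈ S.filter (fun w => f w = i), a w v ≤ θ := by
  let k : ℕ := ⌊2 * (γ / θ)⌋₊ + 1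
  have hk : 2 * γ < k * θ := by
    rw [← div_lt_iff₀ hθ, mul_div_assoc]
    exact_mod_cast Nat.lt_floor_add_one (2 * (γ / θ))
  obtain ⟨g, hg⟩ := exists_coloring_sum_class_lt (ι := S) (κ := Fin k)
    (a := fun w v => a w v) (θ := fun _ => θ)
    (fun w v => ha w w.2 v v.2) (fun v => hself v v.2) (fun v => by
      rw [Fintype.card_fin, sum_coe_sort S fun w => a w v]
      linarith [hS v v.2])
  let f : ι → ℕ := Function.extend Subtype.val (fun v => (g v : ℕ)) 0
  have hf (v : S) : f v = g v := Subtype.val_injective.extend_apply _ _ v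
  refine ⟨k, f, ?_, fun v hv => ?_, fun i v hv => ?_⟩
  · push_cast [k]
    gcongr
    exact Nat.floor_le (by positivity)
  · exact (hf ⟨v, hv⟩).trans_lt (g ⟨v, hv⟩).2
  · obtain ⟨hvS, rfl⟩ := mem_filter.1 hv
    calc ∑ w ∈ S with f w = f v, a w v = ∑ w : S with g w = g ⟨v, hvS⟩, a w v := by
          rw [sum_filter, sum_filter, ← sum_coe_sort S]
          simp only [hf, show f v = g ⟨v, hvS⟩ from hf ⟨v, hvS⟩, Fin.val_inj]
      _ ≤ θ := (hg ⟨v, hvS⟩).le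

theorem aff_self (α β N : ℝ) (pw : Link X → ℝ) (v : Link X) : aff α β N pw v v = 0 :=
  if_pos rfl

theorem aff_nonneg {α β N : ℝ} {pw : Link X → ℝ} {w v : Link X} (hβ : 0 ≤ β)
    (hw : 0 ≤ pw w) (hv : 0 < pw v) (hN : β * N * linkLen v ^ α ≤ pw v) :
    0 ≤ aff α β N pw w v := by
  have hc : 0 ≤ cConst α β N pw v :=
    div_nonneg hβ (sub_nonneg.2 ((div_le_one hv).2 hN))
  have hratio : 0 ≤ (linkLen v / linkDist w v) ^ α :=
    Real.rpow_nonneg (div_nonneg dist_nonneg dist_nonneg) α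
  unfold aff
  split_ifs
  · exact le_rfl
  · exact le_min zero_le_one (mul_nonneg (mul_nonneg hc (div_nonneg hw hv.le)) hratio)

/-- **signal strengthening.** There is a universal constant `c > 0` such
that for all `γ ≥ θ > 0`, every finite `γ`-feasible set `S` of links (under any power
assignment) can be partitioned into at most `c (γ/θ)²` sets, each `θ`-feasible. The
partition is encoded by a colouring `f` of the links of `S` with fewer than `k` colours. -/
theorem stmt_13 :
    ∃ c : ℝ, 0 < c ∧
      ∀ (X : Type*) [MetricSpace X] (α β N : ℝ) (pw : Link X → ℝ)
        (S : Finset (Link X)) (γ θ : ℝ),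
        0 < α → 0 < β → 0 ≤ N →
        (∀ v ∈ S, 0 < linkLen v) →
        (∀ v ∈ S, 0 < pw v) →
        (∀ v ∈ S, β * N * linkLen v ^ α < pw v) →
        (∀ v ∈ S, ∀ w ∈ S, w ≠ v → 0 < linkDist w v) →
        0 < θ → θ ≤ γ →
        (∀ v ∈ S, affIn α β N pw S v ≤ γ) →
        ∃ (k : ℕ) (f : Link X → ℕ),
          (k : ℝ) ≤ c * (γ / θ) ^ 2 ∧
          (∀ v ∈ S, f v < k) ∧
          ∀ i : ℕ, ∀ v ∈ S.filter (fun w => f w = i),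
            affIn α β N pw (S.filter (fun w => f w = i)) v ≤ θ := by
  refine ⟨3, by norm_num, fun X _ α β N pw S γ θ _ hβ _ _ hpw hN _ hθ hγ hS => ?_⟩
  obtain ⟨k, f, hk, hlt, hsum⟩ := stmt_13_general
    (fun w hw v hv => aff_nonneg hβ.le (hpw w hw).le (hpw v hv) (hN v hv).le)
    (fun v _ => aff_self α β N pw v) (hθ.le.trans hγ) hθ hS
  exact ⟨k, f, hk.trans (by nlinarith [(one_le_div hθ).2 hγ]), hlt, hsum⟩
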